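/- arXiv:1103.4922 — 2 statements merged into one kernel-verified Lean document; each statement's English description precedes it below -/
import Mathlib

section
/- Let p be an odd prime and fix a unit δ ∈ ℤ_pˣ that is not a square. Consider the following list of integral ternary quadratic forms over ℤ_p: (1) ⟨1,1,1⟩; (2) ⟨1, −ε₁, p^s⟩ with s ≥ 1 and ε₁ ∈ {1, δ}; (3) ⟨1, p^r, ε₁p^r⟩ with r ≥ 1 and ε₁ ∈ {1, δ}; (4) ⟨1, ε₁p^r, ε₂p^s⟩ with s > r ≥ 1 and ε₁, ε₂ ∈ {1, δ}. Then every primitive nondegenerate quadratic form in 3 variables integral over ℤ_p is similar over ℤ_p to exactly one form in this list (in particular, distinct members of the list are pairwise non-similar). -/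
/-- The Gram matrix `M_f` of a quadratic form `f` in `n` variables. -/
noncomputable def gramMatrix {R : Type*} [CommRing R] {n : ℕ}
    (f : QuadraticForm R (Fin n → R)) : Matrix (Fin n) (Fin n) R :=
  Matrix.of fun i j => QuadraticMap.polar f (Pi.single i 1) (Pi.single j 1)

/-- The ideal generated by the coefficients `a_{ij}` of a quadratic form
`f = Σ_{i ≤ j} a_{ij} X_i X_j`. -/
noncomputable def coeffIdeal {R : Type*} [CommRing R] {n : ℕ}
    (f : QuadraticForm R (Fin n → R)) : Ideal R :=
  Ideal.span ((Set.range fun i => f (Pi.single i 1)) ∪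
    (Set.range fun ij : Fin n × Fin n =>
      QuadraticMap.polar f (Pi.single ij.1 1) (Pi.single ij.2 1)))

/-- A quadratic form is primitive if the ideal generated by its coefficients is the whole ring. -/
noncomputable def IsPrimitiveForm {R : Type*} [CommRing R] {n : ℕ}
    (f : QuadraticForm R (Fin n → R)) : Prop :=
  coeffIdeal f = ⊤

/-- Two quadratic forms are similar if a unit multiple of one is isometric to the other. -/
def SimilarForm {R : Type*} [CommRing R] {n : ℕ}
    (f g : QuadraticForm R (Fin n → R)) : Prop :=
  ∃ u : Rˣ, ((u : R) • f).Equivalent g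

/-- The standard list of representatives of similarity classes of primitive ternary quadratic
forms over `ℤ_p` for an odd prime `p`, given a non-square unit `δ`. -/
noncomputable def InStandardList (p : ℕ) [Fact p.Prime] (δ : ℤ_[p]ˣ)
    (g : QuadraticForm ℤ_[p] (Fin 3 → ℤ_[p])) : Prop :=
  g = QuadraticMap.weightedSumSquares ℤ_[p] ![1, 1, 1] ∨
  (∃ (s : ℕ) (ε₁ : ℤ_[p]ˣ), 1 ≤ s ∧ (ε₁ = 1 ∨ ε₁ = δ) ∧
    g = QuadraticMap.weightedSumSquares ℤ_[p]
      ![1, -(ε₁ : ℤ_[p]), (p : ℤ_[p]) ^ s]) ∨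
  (∃ (r : ℕ) (ε₁ : ℤ_[p]ˣ), 1 ≤ r ∧ (ε₁ = 1 ∨ ε₁ = δ) ∧
    g = QuadraticMap.weightedSumSquares ℤ_[p]
      ![1, (p : ℤ_[p]) ^ r, (ε₁ : ℤ_[p]) * (p : ℤ_[p]) ^ r]) ∨
  (∃ (r s : ℕ) (ε₁ ε₂ : ℤ_[p]ˣ), 1 ≤ r ∧ r < s ∧ (ε₁ = 1 ∨ ε₁ = δ) ∧ (ε₂ = 1 ∨ ε₂ = δ) ∧
    g = QuadraticMap.weightedSumSquares ℤ_[p]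
      ![1, (ε₁ : ℤ_[p]) * (p : ℤ_[p]) ^ r, (ε₂ : ℤ_[p]) * (p : ℤ_[p]) ^ s])

/-!
Let `R` be a Henselian discrete valuation ring with finite residue field in which `2` is a unit.

A vector whose value generates the ideal of all values of a quadratic form spans an orthogonal
summand, so every form is diagonal with each coefficient dividing the next. A unit of `R` is a
square iff its residue is. Hence there are two square classes of units, and a binary form
`⟨α, β⟩` with unit coefficients represents all units, so it is determined by the class of `αβ`.
Scaling by a unit brings the resulting diagonal forms into the list.

Conversely, let `Pᵀ A P = B` with `A`, `B` diagonal and `P` invertible. If some coefficient of `A`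
were not divisible by the coefficient of `B` in the same position, then `P` modulo `𝔪` would have a
zero block forcing `det P ∈ 𝔪`; so the valuations agree. Reduction modulo `𝔪` determines the square
class of a coefficient whose valuation occurs only once, and determinants determine the square class
of the product of the coefficients. Up to a common unit factor, this separates the listed forms.
-/

open QuadraticMap IsLocalRing Polynomial

section Splitting

variable {R M : Type*} [CommRing R] [AddCommGroup M] [Module R M]

theorem dvd_polar_of_forall_dvd {f : QuadraticForm R M} {a : R} (h : ∀ y, a ∣ f y) (x y : M) :
    a ∣ polar f x y :=
  ((h _).sub (h _)).sub (h _)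

theorem exists_forall_map_dvd [PreValuationRing R] [Module.Finite R M] (f : QuadraticForm R M) :
    ∃ x, ∀ y, f x ∣ f y := by
  obtain ⟨n, s, hs⟩ := Module.Finite.exists_fin (R := R) (M := M)
  have hdir : Directed (fun a b ↦ b ∣ a) f := fun x y ↦
    (ValuationRing.dvd_total (f x) (f y)).elim (fun h ↦ ⟨x, dvd_rfl, h⟩) fun h ↦ ⟨y, h, dvd_rfl⟩
  have : IsTrans R fun a b ↦ b ∣ a := ⟨fun _ _ _ hab hbc ↦ hbc.trans hab⟩
  obtain ⟨x, hx⟩ := hdir.finite_le (Sum.elim s fun ij : Fin n × Fin n ↦ s ij.1 + s ij.2)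
  have hself (i) : f x ∣ f (s i) := hx (.inl i)
  have hpolar (i j) : f x ∣ polar f (s i) (s j) :=
    ((hx (.inr (i, j))).sub (hself i)).sub (hself j)
  refine ⟨x, fun y ↦ ?_⟩
  obtain ⟨c, rfl⟩ := (Submodule.mem_span_range_iff_exists_fun R).1 (hs ▸ Submodule.mem_top : y ∈ _)
  rw [QuadraticMap.map_sum]
  refine dvd_add (Finset.dvd_sum fun i _ ↦ ?_) (Finset.dvd_sum fun ij _ ↦ ?_)
  · rw [QuadraticMap.map_smul]
    exact (hself i).mul_left _
  · induction ij with | _ i j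
    simpa [polar_smul_left, polar_smul_right] using ((hpolar i j).mul_left _).mul_left _

theorem exists_eq_smul_of_forall_dvd [IsDomain R] (ψ : M →ₗ[R] R) {c : R} (hc : c ≠ 0)
    (h : ∀ y, c ∣ ψ y) : ∃ φ : M →ₗ[R] R, ψ = c • φ := by
  choose φ hφ using h
  refine ⟨⟨⟨φ, fun x y ↦ mul_left_cancel₀ hc ?_⟩, fun a x ↦ mul_left_cancel₀ hc ?_⟩, ?_⟩
  · rw [mul_add, ← hφ, ← hφ, ← hφ, map_add]
  · rw [RingHom.id_apply, smul_eq_mul, mul_left_comm, ← hφ, ← hφ, map_smul, smul_eq_mul]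
  · ext y
    exact hφ y

theorem exists_linearMap_associated_eq [IsDomain R] [Invertible (2 : R)]
    {f : QuadraticForm R M} {x : M} (hx : f x ≠ 0) (h : ∀ y, f x ∣ f y) :
    ∃ φ : M →ₗ[R] R, φ x = 1 ∧ ∀ y, associated f x y = f x * φ y := by
  obtain ⟨φ, hφ⟩ := exists_eq_smul_of_forall_dvd (associated f x) hx fun y ↦ by
    simpa [associated_apply, polar] using (dvd_polar_of_forall_dvd h x y).mul_left (⅟2)
  refine ⟨φ, mul_left_cancel₀ hx ?_, fun y ↦ by rw [hφ]; rfl⟩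
  rw [mul_one, ← smul_eq_mul, ← LinearMap.smul_apply, ← hφ, associated_eq_self_apply]

theorem free_ker_of_apply_eq_one [IsLocalRing R] [Module.Free R M] [Module.Finite R M]
    {φ : M →ₗ[R] R} {x : M} (hx : φ x = 1) :
    Module.Free R (LinearMap.ker φ) ∧ Module.Finite R (LinearMap.ker φ) := by
  let π : M →ₗ[R] LinearMap.ker φ :=
    (LinearMap.id - φ.smulRight x).codRestrict _ fun y ↦ by simp [hx]
  have hπ : π ∘ₗ (LinearMap.ker φ).subtype = LinearMap.id :=
    LinearMap.ext fun y ↦ Subtype.ext <| by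
      change (y : M) - φ y • x = y
      rw [LinearMap.mem_ker.1 y.2, zero_smul, sub_zero]
  have hfin : Module.Finite R (LinearMap.ker φ) :=
    .of_surjective π fun y ↦ ⟨y, LinearMap.congr_fun hπ y⟩
  have hproj : Module.Projective R (LinearMap.ker φ) := .of_split _ _ hπ
  exact ⟨Module.free_of_flat_of_isLocalRing, hfin⟩

theorem finrank_ker_add_one_of_apply_eq_one [IsDomain R] [Module.Finite R M] {φ : M →ₗ[R] R}
    {x : M} (hx : φ x = 1) : Module.finrank R (LinearMap.ker φ) + 1 = Module.finrank R M := by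
  have hφ : Function.Surjective φ := fun c ↦ ⟨c • x, by simp [hx]⟩
  rw [← Submodule.finrank_quotient_add_finrank (LinearMap.ker φ),
    (φ.quotKerEquivOfSurjective hφ).finrank_eq, Module.finrank_self, add_comm]

theorem exists_isOrthoᵢ_basis_dvd [IsDomain R] [ValuationRing R] [Invertible (2 : R)] {n : ℕ}
    [Module.Free R M] [Module.Finite R M] (hn : Module.finrank R M = n) (f : QuadraticForm R M) :
    ∃ b : Module.Basis (Fin n) R M, (associated (R := R) f).IsOrthoᵢ b ∧
      ∀ i j, i ≤ j → f (b i) ∣ f (b j) := by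
  induction n generalizing M with
  | zero => exact ⟨Module.finBasisOfFinrankEq R M hn, fun i ↦ i.elim0, fun i ↦ i.elim0⟩
  | succ n ih =>
    obtain ⟨x, hx⟩ := exists_forall_map_dvd f
    by_cases hx0 : f x = 0
    · have hf : f = 0 := QuadraticMap.ext fun y ↦ zero_dvd_iff.1 (hx0 ▸ hx y)
      exact ⟨Module.finBasisOfFinrankEq R M hn, fun i j _ ↦ by simp [hf, Function.onFun],
        fun i j _ ↦ by simp [hf]⟩
    -- As `φ` is `y ↦ B(x, y) / f x`, its kernel is an orthogonal complement of `x`.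
    obtain ⟨φ, hφx, hφ⟩ := exists_linearMap_associated_eq hx0 hx
    obtain ⟨_, _⟩ := free_ker_of_apply_eq_one hφx
    have hrank := finrank_ker_add_one_of_apply_eq_one hφx
    obtain ⟨b, hortho, hdvd⟩ := ih (M := LinearMap.ker φ) (by omega)
      (f.comp (LinearMap.ker φ).subtype)
    have hxb (i) : associated f x (b i) = 0 := by rw [hφ, LinearMap.mem_ker.1 (b i).2, mul_zero]
    refine ⟨.mkFinCons x b (fun c y hy h ↦ ?_) fun z ↦ ⟨-φ z, by simp [hφx]⟩, ?_, ?_⟩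
    · simpa [hφx, LinearMap.mem_ker.1 hy] using congrArg φ h
    · rw [Module.Basis.coe_mkFinCons]
      intro i j hij
      cases i using Fin.cases <;> cases j using Fin.cases
      · exact absurd rfl hij
      · exact hxb _
      · exact (associated_isSymm R f _ _).trans (hxb _)
      · exact hortho fun h ↦ hij (congrArg Fin.succ h)
    · rw [Module.Basis.coe_mkFinCons]
      intro i j hij
      cases i using Fin.cases with
      | zero => exact hx _
      | succ i =>
        cases j using Fin.cases with
        | zero => simp at hij
        | succ j => exact hdvd i j (Fin.succ_le_succ_iff.1 hij)

theorem exists_equivalent_weightedSumSquares_dvd [IsDomain R] [ValuationRing R] [Invertible (2 : R)]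
    [Module.Free R M] [Module.Finite R M] {n : ℕ} (hn : Module.finrank R M = n)
    (f : QuadraticForm R M) : ∃ w : Fin n → R, (∀ i j, i ≤ j → w i ∣ w j) ∧
      f.Equivalent (weightedSumSquares R w) := by
  obtain ⟨b, hortho, hdvd⟩ := exists_isOrthoᵢ_basis_dvd hn f
  exact ⟨fun i ↦ f (b i), hdvd, basisRepr_eq_of_iIsOrtho f b hortho ▸
    ⟨isometryEquivBasisRepr f b⟩⟩

end Splitting

section GramMatrix

variable {R : Type*} [CommRing R]

theorem IsPrimitiveForm.isUnit_of_forall_dvd {n : ℕ} {f : QuadraticForm R (Fin n → R)}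
    (hf : IsPrimitiveForm f) {a : R} (ha : ∀ x, a ∣ f x) : IsUnit a := by
  rw [← Ideal.span_singleton_eq_top, eq_top_iff, ← show coeffIdeal f = ⊤ from hf, coeffIdeal,
    Ideal.span_le]
  rintro _ (⟨i, rfl⟩ | ⟨ij, rfl⟩)
  · exact Ideal.mem_span_singleton.2 (ha _)
  · exact Ideal.mem_span_singleton.2 (dvd_polar_of_forall_dvd ha _ _)

variable [Invertible (2 : R)]

theorem gramMatrix_eq_two_smul_toMatrix' {n : ℕ} (f : QuadraticForm R (Fin n → R)) :
    gramMatrix f = (2 : R) • f.toMatrix' := by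
  ext i j
  simp [gramMatrix, QuadraticForm.toMatrix', LinearMap.toMatrix₂'_apply, associated_apply, polar]

variable {ι : Type*} [Fintype ι]

theorem associated_weightedSumSquares (w x y : ι → R) :
    associated (weightedSumSquares R w) x y = ∑ i, w i * (x i * y i) := by
  simp only [associated_apply, weightedSumSquares_apply, ← Finset.sum_sub_distrib,
    Module.End.smul_def, half_moduleEnd_apply_eq_half_smul, smul_eq_mul, Pi.add_apply]
  rw [Finset.mul_sum]
  refine Finset.sum_congr rfl fun i _ ↦ ?_
  linear_combination (w i * (x i * y i)) * invOf_mul_self (2 : R)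

variable [DecidableEq ι]

theorem toMatrix'_weightedSumSquares (w : ι → R) :
    QuadraticForm.toMatrix' (weightedSumSquares R w) = Matrix.diagonal w := by
  ext i j
  obtain rfl | hij := eq_or_ne i j
  · simp [QuadraticForm.toMatrix', associated_weightedSumSquares, Pi.single_apply]
  · simp [QuadraticForm.toMatrix', associated_weightedSumSquares, Pi.single_apply, hij, hij.symm]

theorem exists_transpose_mul_toMatrix'_mul_eq {f g : QuadraticForm R (ι → R)}
    (h : f.Equivalent g) :
    ∃ P : Matrix ι ι R, IsUnit P.det ∧ P.transpose * f.toMatrix' * P = g.toMatrix' := by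
  obtain ⟨e⟩ := h
  refine ⟨LinearMap.toMatrix' e.symm.toLinearEquiv, ?_, ?_⟩
  · rw [LinearMap.det_toMatrix']
    exact LinearEquiv.isUnit_det' _
  · rw [← QuadraticForm.toMatrix'_comp]
    congr 1
    ext x
    exact e.symm.map_app x

theorem exists_transpose_mul_diagonal_mul_eq {a b : ι → R}
    (h : (weightedSumSquares R a).Equivalent (weightedSumSquares R b)) :
    ∃ P : Matrix ι ι R, IsUnit P.det ∧
      P.transpose * Matrix.diagonal a * P = Matrix.diagonal b := by
  simpa only [toMatrix'_weightedSumSquares] using exists_transpose_mul_toMatrix'_mul_eq h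

theorem ne_zero_of_equivalent_weightedSumSquares {n : ℕ} {f : QuadraticForm R (Fin n → R)}
    (hf : (gramMatrix f).det ≠ 0) {w : Fin n → R} (h : f.Equivalent (weightedSumSquares R w))
    (i : Fin n) : w i ≠ 0 := by
  obtain ⟨P, -, hP⟩ := exists_transpose_mul_toMatrix'_mul_eq h.symm
  rw [toMatrix'_weightedSumSquares] at hP
  intro hi
  rw [gramMatrix_eq_two_smul_toMatrix', ← hP, Matrix.det_smul, Matrix.det_mul, Matrix.det_mul,
    Matrix.det_diagonal, Finset.prod_eq_zero (Finset.mem_univ i) hi] at hf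
  simp at hf

end GramMatrix

section Weights

variable {R ι : Type*} [CommRing R] [Fintype ι]

theorem det_eq_zero_of_forall_le_le_eq_zero [LinearOrder ι] {M : Matrix ι ι R} (i : ι)
    (h : ∀ k j, k ≤ i → i ≤ j → M k j = 0) : M.det = 0 := by
  rw [Matrix.twoBlockTriangular_det M (i ≤ ·) fun k hk j hj ↦ h k j (not_le.1 hk).le hj,
    Matrix.det_eq_zero_of_row_eq_zero (A := M.toSquareBlockProp (i ≤ ·)) ⟨i, le_rfl⟩
      fun j ↦ h i j le_rfl j.2, zero_mul]

theorem dvd_of_diagonal_mul_eq_mul_diagonal [LinearOrder ι] [IsLocalRing R]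
    {P Q : Matrix ι ι R} {a b : ι → R}
    (ha : ∀ i j, i ≤ j → a i ∣ a j) (hb : ∀ i j, i ≤ j → b i ∣ b j) (hP : IsUnit P.det)
    (h : Matrix.diagonal a * P = Q * Matrix.diagonal b) (i : ι) : b i ∣ a i := by
  by_contra hi
  have hblock (k j) (hk : k ≤ i) (hj : i ≤ j) : residue R (P k j) = 0 := by
    by_contra hu
    have hkj : a k * P k j = Q k j * b j := by simpa using congrFun₂ h k j
    have hjk : b j ∣ a k :=
      ((residue_ne_zero_iff_isUnit _).1 hu).dvd_mul_right.1 ⟨Q k j, hkj.trans (mul_comm _ _)⟩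
    exact hi ((hb i j hj).trans (hjk.trans (ha k i hk)))
  have hdet := det_eq_zero_of_forall_le_le_eq_zero (M := P.map (residue R)) i hblock
  rw [← RingHom.mapMatrix_apply, ← RingHom.map_det] at hdet
  exact (residue_ne_zero_iff_isUnit _).2 hP hdet

variable [Invertible (2 : R)]

theorem exists_sq_mul_prod_eq_prod_of_equivalent {a b : ι → R}
    (h : (weightedSumSquares R a).Equivalent (weightedSumSquares R b)) :
    ∃ u : Rˣ, (u : R) ^ 2 * ∏ i, a i = ∏ i, b i := by
  classical
  obtain ⟨P, ⟨u, hu⟩, hP⟩ := exists_transpose_mul_diagonal_mul_eq h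
  have hdet := congrArg Matrix.det hP
  simp only [Matrix.det_mul, Matrix.det_transpose, Matrix.det_diagonal, ← hu] at hdet
  exact ⟨u, by rw [← hdet]; ring⟩

theorem exists_diagonal_mul_eq_mul_diagonal [DecidableEq ι] {a b : ι → R}
    (h : (weightedSumSquares R a).Equivalent (weightedSumSquares R b)) :
    ∃ P Q : Matrix ι ι R, IsUnit P.det ∧ P.transpose * Matrix.diagonal a * P = Matrix.diagonal b ∧
      Matrix.diagonal a * P = Q * Matrix.diagonal b := by
  obtain ⟨P, hP, hab⟩ := exists_transpose_mul_diagonal_mul_eq h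
  refine ⟨P, P.transpose⁻¹, hP, hab, ?_⟩
  rw [← hab, Matrix.mul_assoc, Matrix.nonsing_inv_mul_cancel_left _ _ (P.det_transpose ▸ hP)]

theorem associated_of_weightedSumSquares_equivalent [IsDomain R] [LinearOrder ι]
    [IsLocalRing R] {a b : ι → R}
    (ha : ∀ i j, i ≤ j → a i ∣ a j) (hb : ∀ i j, i ≤ j → b i ∣ b j)
    (h : (weightedSumSquares R a).Equivalent (weightedSumSquares R b)) (i : ι) :
    Associated (a i) (b i) := by
  obtain ⟨P, Q, hP, -, hPQ⟩ := exists_diagonal_mul_eq_mul_diagonal h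
  obtain ⟨P', Q', hP', -, hPQ'⟩ := exists_diagonal_mul_eq_mul_diagonal h.symm
  exact associated_of_dvd_dvd (dvd_of_diagonal_mul_eq_mul_diagonal hb ha hP' hPQ' i)
    (dvd_of_diagonal_mul_eq_mul_diagonal ha hb hP hPQ i)

end Weights

section Squares

theorem isSquare_mul_iff_right {G : Type*} [CommGroup G] {a b : G} (ha : IsSquare a) :
    IsSquare (a * b) ↔ IsSquare b :=
  ⟨fun h ↦ by simpa using h.div ha, fun h ↦ ha.mul h⟩

theorem eq_of_isSquare_mul {G : Type*} [CommGroup G] {δ a b : G} (hδ : ¬ IsSquare δ)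
    (ha : a = 1 ∨ a = δ) (hb : b = 1 ∨ b = δ) (h : IsSquare (a * b)) : a = b := by
  obtain rfl | rfl := ha <;> obtain rfl | rfl := hb <;> simp_all

theorem isSquare_mul_of_not_isSquare {F : Type*} [Field F] [Finite F] {a b : F}
    (ha : ¬ IsSquare a) (hb : ¬ IsSquare b) : IsSquare (a * b) := by
  classical
  have := Fintype.ofFinite F
  have ha0 : a ≠ 0 := by rintro rfl; exact ha .zero
  have hb0 : b ≠ 0 := by rintro rfl; exact hb .zero
  rw [← quadraticChar_one_iff_isSquare (mul_ne_zero ha0 hb0), map_mul,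
    quadraticChar_neg_one_iff_not_isSquare.2 ha, quadraticChar_neg_one_iff_not_isSquare.2 hb]
  norm_num

theorem exists_mul_sq_add_mul_sq_eq {F : Type*} [Field F] [Finite F] {a b : F}
    (ha : a ≠ 0) (hb : b ≠ 0) (c : F) : ∃ x y : F, a * x ^ 2 + b * y ^ 2 = c := by
  have := Fintype.ofFinite F
  obtain hF | hF := eq_or_ne (ringChar F) 2
  · obtain ⟨x, hx⟩ := FiniteField.isSquare_of_char_two hF (c / a)
    exact ⟨x, 0, by rw [pow_two, ← hx, mul_div_cancel₀ c ha]; ring⟩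
  · obtain ⟨x, y, hxy⟩ := FiniteField.exists_root_sum_quadratic
      (f := C a * X ^ 2 + C 0 * X + C 0) (g := C b * X ^ 2 + C 0 * X + C (-c))
      (degree_quadratic ha) (degree_quadratic hb) (FiniteField.odd_card_of_char_ne_two hF)
    have hxy' : a * x ^ 2 + (b * y ^ 2 - c) = 0 := by simpa [← sub_eq_add_neg] using hxy
    exact ⟨x, y, by linear_combination hxy'⟩

variable {R : Type*} [CommRing R] [HenselianLocalRing R] [Invertible (2 : R)]

theorem isSquare_residue_iff {u : Rˣ} : IsSquare (residue R u) ↔ IsSquare u := by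
  refine ⟨fun ⟨c, hc⟩ ↦ ?_, fun h ↦ (h.map (Units.coeHom R)).map (residue R)⟩
  obtain ⟨a, rfl⟩ := residue_surjective c
  have ha : IsUnit a := by
    rw [← residue_ne_zero_iff_isUnit]
    intro h
    rw [h, mul_zero] at hc
    exact (residue_ne_zero_iff_isUnit _).2 u.isUnit hc
  obtain ⟨r, hr, -⟩ := HenselianLocalRing.is_henselian (X ^ 2 - C (u : R))
    (monic_X_pow_sub_C _ two_ne_zero) a
    (by rw [← residue_eq_zero_iff]; simp [hc, pow_two])
    (by simpa [one_add_one_eq_two] using (isUnit_of_invertible (2 : R)).mul ha)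
  have hr : (u : R) = r * r := by simpa [sub_eq_zero, pow_two, eq_comm] using hr
  have hru : IsUnit r := isUnit_of_mul_isUnit_left (hr ▸ u.isUnit)
  exact ⟨hru.unit, Units.ext hr⟩

variable [Finite (ResidueField R)]

theorem isSquare_units_mul_of_not_isSquare {u v : Rˣ} (hu : ¬ IsSquare u) (hv : ¬ IsSquare v) :
    IsSquare (u * v) := by
  rw [← isSquare_residue_iff] at hu hv ⊢
  rw [Units.val_mul, map_mul]
  exact isSquare_mul_of_not_isSquare hu hv

theorem exists_isSquare_mul {δ : Rˣ} (hδ : ¬ IsSquare δ) (w : Rˣ) :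
    ∃ ε, (ε = 1 ∨ ε = δ) ∧ IsSquare (w * ε) := by
  by_cases hw : IsSquare w
  · exact ⟨1, .inl rfl, by rwa [mul_one]⟩
  · exact ⟨δ, .inr rfl, isSquare_units_mul_of_not_isSquare hw hδ⟩

theorem exists_units_mul_sq_add_mul_sq_eq (u v w : Rˣ) :
    ∃ x y : R, u * x ^ 2 + v * y ^ 2 = w := by
  obtain ⟨x, y, hxy⟩ := exists_mul_sq_add_mul_sq_eq ((residue_ne_zero_iff_isUnit _).2 u.isUnit)
    ((residue_ne_zero_iff_isUnit _).2 v.isUnit) (residue R w)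
  obtain ⟨x, rfl⟩ := residue_surjective x
  obtain ⟨y, rfl⟩ := residue_surjective y
  have hres : residue R (u * x ^ 2 + v * y ^ 2) = residue R w := by simpa using hxy
  obtain ⟨z, hz⟩ : IsUnit (u * x ^ 2 + v * y ^ 2) :=
    (residue_ne_zero_iff_isUnit _).1 (hres ▸ (residue_ne_zero_iff_isUnit _).2 w.isUnit)
  have hwz : IsSquare (residue R ↑(w / z)) :=
    ⟨1, mul_right_cancel₀ ((residue_ne_zero_iff_isUnit _).2 z.isUnit) <| by
      rw [← map_mul, ← Units.val_mul, div_mul_cancel, hz, hres, one_mul, one_mul]⟩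
  obtain ⟨t, ht⟩ := isSquare_residue_iff.1 hwz
  refine ⟨t * x, t * y, ?_⟩
  rw [div_eq_iff_eq_mul.1 ht, Units.val_mul, Units.val_mul, hz]
  ring

end Squares

section IsolatedWeight

variable {R : Type*} [CommRing R] [IsDomain R]

theorem exists_mem_maximalIdeal_mul_sq_eq [PreValuationRing R] {a c x : R} (ha : a ≠ 0)
    (hca : ¬ Associated c a) (h : a ∣ c * x) :
    ∃ m ∈ maximalIdeal R, c * x ^ 2 = a * m := by
  obtain ⟨m, rfl⟩ | ⟨m, rfl⟩ := ValuationRing.dvd_total a c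
  · have hm : m ∈ maximalIdeal R := fun hu ↦ hca (Associated.symm ⟨hu.unit, rfl⟩)
    exact ⟨m * x ^ 2, Ideal.mul_mem_right _ _ hm, mul_assoc _ _ _⟩
  · have hm : m ∈ maximalIdeal R := fun hu ↦ hca ⟨hu.unit, rfl⟩
    obtain ⟨y, rfl⟩ := (mul_dvd_mul_iff_left (left_ne_zero_of_mul ha)).1 h
    exact ⟨m * y ^ 2, Ideal.mul_mem_right _ _ hm, by ring⟩

theorem exists_eq_mul_sq_of_equivalent [HenselianLocalRing R] [PreValuationRing R]
    [Invertible (2 : R)] {ι : Type*} [Fintype ι] {a b : ι → R}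
    (h : (weightedSumSquares R a).Equivalent (weightedSumSquares R b)) {i : ι}
    (hi : a i ≠ 0) (hab : Associated (a i) (b i)) (hiso : ∀ j, j ≠ i → ¬ Associated (a j) (a i)) :
    ∃ u : Rˣ, b i = a i * u ^ 2 := by
  classical
  obtain ⟨P, Q, -, hP, hPQ⟩ := exists_diagonal_mul_eq_mul_diagonal h
  obtain ⟨v, hv⟩ := hab
  have hdvd (k) : a i ∣ a k * P k i := by
    have hki := congrFun₂ hPQ k i
    rw [Matrix.diagonal_mul, Matrix.mul_diagonal, ← hv] at hki
    exact ⟨Q k i * v, by rw [hki]; ring⟩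
  have hterm (k) (hk : k ≠ i) : ∃ c ∈ maximalIdeal R, a k * P k i ^ 2 = a i * c :=
    exists_mem_maximalIdeal_mul_sq_eq hi (hiso k hk) (hdvd k)
  choose! c hc hac using hterm
  have hsum : b i = a i * (P i i ^ 2 + ∑ k ∈ Finset.univ.erase i, c k) := by
    calc b i = ∑ k, a k * P k i ^ 2 := by
          rw [← Matrix.diagonal_apply_eq b i, ← hP, Matrix.mul_apply]
          exact Finset.sum_congr rfl fun k _ ↦ by
            rw [Matrix.mul_diagonal, Matrix.transpose_apply]; ring
      _ = a i * P i i ^ 2 + ∑ k ∈ Finset.univ.erase i, a i * c k := by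
          rw [← Finset.add_sum_erase _ _ (Finset.mem_univ i),
            Finset.sum_congr rfl fun k hk ↦ hac k (Finset.ne_of_mem_erase hk)]
      _ = _ := by rw [← Finset.mul_sum, mul_add]
  have hv' : (v : R) = P i i ^ 2 + ∑ k ∈ Finset.univ.erase i, c k :=
    mul_left_cancel₀ hi (hv.trans hsum)
  have hsq : IsSquare (residue R v) := ⟨residue R (P i i), by
    rw [hv', map_add, (residue_eq_zero_iff _).2 (sum_mem fun k hk ↦
      hc k (Finset.ne_of_mem_erase hk)), add_zero, pow_two, map_mul]⟩
  obtain ⟨t, rfl⟩ := isSquare_residue_iff.1 hsq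
  exact ⟨t, by rw [← hv, Units.val_mul, pow_two]⟩

end IsolatedWeight

section BinaryComponent

variable {R ι : Type*} [CommRing R] [Fintype ι]

theorem weightedSumSquares_equivalent_of_mul_sq_add_mul_sq_eq {w w' : ι → R} {i j : ι}
    (hij : i ≠ j) {u v c x y : R} {t : Rˣ} (ht : u * x ^ 2 + v * y ^ 2 = t)
    (hi : w i = u * c) (hj : w j = v * c) (hi' : w' i = t * c) (hj' : w' j = t * u * v * c)
    (h : ∀ k, k ≠ i → k ≠ j → w k = w' k) :
    (weightedSumSquares R w').Equivalent (weightedSumSquares R w) := by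
  classical
  -- In coordinates `i`, `j`: the basis `(x, y)`, `(-v y, u x)`, orthogonal for `u X² + v Y²`.
  let e : (ι → R) ≃ₗ[R] (ι → R) :=
    { toFun z k := if k = i then x * z i - v * y * z j else
        if k = j then y * z i + u * x * z j else z k
      invFun z k := if k = i then ↑t⁻¹ * (u * x * z i + v * y * z j) else
        if k = j then ↑t⁻¹ * (x * z j - y * z i) else z k
      map_add' z z' := by ext k; simp only [Pi.add_apply]; split_ifs <;> ring
      map_smul' r z := by
        ext k; simp only [Pi.smul_apply, smul_eq_mul, RingHom.id_apply]; split_ifs <;> ring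
      left_inv z := by
        ext k
        simp only [if_neg hij.symm, if_true]
        split_ifs with hki hkj
        · rw [hki]; linear_combination ↑t⁻¹ * z i * ht + z i * t.inv_mul
        · rw [hkj]; linear_combination ↑t⁻¹ * z j * ht + z j * t.inv_mul
        · rfl
      right_inv z := by
        ext k
        simp only [if_neg hij.symm, if_true]
        split_ifs with hki hkj
        · rw [hki]; linear_combination ↑t⁻¹ * z i * ht + z i * t.inv_mul
        · rw [hkj]; linear_combination ↑t⁻¹ * z j * ht + z j * t.inv_mul
        · rfl }
  refine ⟨⟨e, fun z ↦ ?_⟩⟩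
  simp only [weightedSumSquares_apply, smul_eq_mul]
  rw [← Finset.sum_add_sum_compl {i, j}, ← Finset.sum_add_sum_compl {i, j}, Finset.sum_pair hij,
    Finset.sum_pair hij]
  congr 1
  · simp only [hi, ↓reduceIte, hj, hij.symm, hi', hj', e]
    linear_combination c * (z i ^ 2 + u * v * z j ^ 2) * ht
  · refine Finset.sum_congr rfl fun k hk ↦ ?_
    obtain ⟨hki, hkj⟩ : k ≠ i ∧ k ≠ j := by simpa using hk
    simp [e, hki, hkj, h k hki hkj]

end BinaryComponent

section JordanForm

variable {R ι : Type*} [CommRing R] [Fintype ι]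

/-- The diagonal form `∑ αᵢ ϖ ^ eᵢ Xᵢ²` with unit coefficients `αᵢ`: the shape of a Jordan
splitting of a quadratic form over a discrete valuation ring with uniformizer `ϖ`. -/
def jordanForm (ϖ : R) (α : ι → Rˣ) (e : ι → ℕ) : QuadraticForm R (ι → R) :=
  weightedSumSquares R fun i ↦ (α i : R) * ϖ ^ e i

variable {ϖ : R} {α β : ι → Rˣ} {e e' : ι → ℕ}

theorem smul_jordanForm (u : Rˣ) (α : ι → Rˣ) (e : ι → ℕ) :
    (u : R) • jordanForm ϖ α e = jordanForm ϖ (fun i ↦ u * α i) e := by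
  ext x
  simp [jordanForm, weightedSumSquares_apply, Finset.mul_sum, mul_assoc]

theorem jordanForm_equivalent_of_isSquare_mul (h : ∀ i, IsSquare (α i * β i)) :
    (jordanForm ϖ α e).Equivalent (jordanForm ϖ β e) := by
  choose t ht using h
  refine ⟨QuadraticForm.isometryEquivWeightedSumSquaresWeightedSumSquares
    (fun i ↦ (β i)⁻¹ * t i) fun i ↦ ?_⟩
  have hα : α i = β i * ((β i)⁻¹ * t i) ^ 2 := by
    rw [mul_pow, pow_two (t i), ← ht]
    simp [pow_two, mul_left_comm, mul_assoc]
  rw [hα]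
  push_cast
  ring

theorem jordanForm_equivalent_of_isSquare_mul_mul_mul [HenselianLocalRing R] [Invertible (2 : R)]
    [Finite (ResidueField R)] {i j : ι} (hij : i ≠ j) (he : e i = e j)
    (hsq : IsSquare (α i * α j * (β i * β j)))
    (h : ∀ k, k ≠ i → k ≠ j → IsSquare (α k * β k)) :
    (jordanForm ϖ α e).Equivalent (jordanForm ϖ β e) := by
  classical
  let γ := Function.update (Function.update α i (β i)) j (β i * α i * α j)
  obtain ⟨x, y, hxy⟩ := exists_units_mul_sq_add_mul_sq_eq (α i) (α j) (β i)
  have hαγ : (jordanForm ϖ γ e).Equivalent (jordanForm ϖ α e) :=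
    weightedSumSquares_equivalent_of_mul_sq_add_mul_sq_eq (c := ϖ ^ e i) hij hxy rfl (by rw [he])
      (by simp [γ, hij]) (by simp [γ, he]) fun k hi hj ↦ by simp [γ, hi, hj]
  refine hαγ.symm.trans (jordanForm_equivalent_of_isSquare_mul fun k ↦ ?_)
  obtain rfl | hj := eq_or_ne k j
  · simpa [γ, mul_comm, mul_left_comm, mul_assoc] using hsq
  obtain rfl | hi := eq_or_ne k i
  · simp [γ, hij]
  · simpa [γ, hi, hj] using h k hi hj

variable [IsDomain R] [IsDiscreteValuationRing R]

theorem exists_equivalent_jordanForm [Invertible (2 : R)] (hϖ : Irreducible ϖ) {n : ℕ}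
    {f : QuadraticForm R (Fin (n + 1) → R)} (hprim : IsPrimitiveForm f)
    (hf : (gramMatrix f).det ≠ 0) :
    ∃ (α : Fin (n + 1) → Rˣ) (e : Fin (n + 1) → ℕ), e 0 = 0 ∧ Monotone e ∧
      f.Equivalent (jordanForm ϖ α e) := by
  obtain ⟨w, hw, hfw⟩ := exists_equivalent_weightedSumSquares_dvd (Module.finrank_fin_fun R) f
  choose e α hα using fun i ↦ IsDiscreteValuationRing.eq_unit_mul_pow_irreducible
    (ne_zero_of_equivalent_weightedSumSquares hf hfw i) hϖ
  obtain rfl : w = fun i ↦ α i * ϖ ^ e i := funext hα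
  refine ⟨α, e, ?_, fun i j hij ↦ ?_, hfw⟩
  · have hdvd (x) : (α 0 : R) * ϖ ^ e 0 ∣ f x := by
      obtain ⟨g⟩ := hfw
      rw [← g.map_app, weightedSumSquares_apply]
      exact Finset.dvd_sum fun i _ ↦ (hw 0 i (Fin.zero_le i)).mul_right _
    have hunit := (Units.isUnit_units_mul _ _).1 (hprim.isUnit_of_forall_dvd hdvd)
    by_contra h0
    exact hϖ.not_isUnit ((isUnit_pow_iff h0).1 hunit)
  · have hdvd := hw i j hij
    rwa [Units.dvd_mul_left, Units.mul_left_dvd,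
      pow_dvd_pow_iff hϖ.ne_zero hϖ.not_isUnit] at hdvd

theorem exponent_eq_of_jordanForm_equivalent [LinearOrder ι] [Invertible (2 : R)]
    (hϖ : Irreducible ϖ) (he : Monotone e) (he' : Monotone e')
    (h : (jordanForm ϖ α e).Equivalent (jordanForm ϖ β e')) : e = e' := by
  have hdvd (α : ι → Rˣ) {e : ι → ℕ} (he : Monotone e) (i j : ι) (hij : i ≤ j) :
      (α i : R) * ϖ ^ e i ∣ α j * ϖ ^ e j := by
    rw [Units.dvd_mul_left, Units.mul_left_dvd]
    exact pow_dvd_pow _ (he hij)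
  funext i
  obtain ⟨u, hu⟩ := associated_of_weightedSumSquares_equivalent (hdvd α he) (hdvd β he') h i
  refine IsDiscreteValuationRing.unit_mul_pow_congr_pow hϖ hϖ (α i * u) (β i) _ _ ?_
  rw [← hu, Units.val_mul, mul_right_comm]

theorem isSquare_prod_mul_prod_of_jordanForm_equivalent [Invertible (2 : R)]
    (hϖ : ϖ ≠ 0) (h : (jordanForm ϖ α e).Equivalent (jordanForm ϖ β e)) :
    IsSquare ((∏ i, α i) * ∏ i, β i) := by
  classical
  obtain ⟨u, hu⟩ := exists_sq_mul_prod_eq_prod_of_equivalent h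
  rw [Finset.prod_mul_distrib, Finset.prod_mul_distrib, ← mul_assoc] at hu
  have hu := mul_right_cancel₀ (Finset.prod_ne_zero_iff.2 fun i _ ↦ pow_ne_zero _ hϖ) hu
  have hu : u ^ 2 * ∏ i, α i = ∏ i, β i := Units.ext (by push_cast; exact hu)
  exact ⟨u * ∏ i, α i, by rw [← hu, pow_two]; ac_rfl⟩

theorem isSquare_mul_of_jordanForm_equivalent [HenselianLocalRing R] [Invertible (2 : R)]
    (hϖ : Irreducible ϖ) (h : (jordanForm ϖ α e).Equivalent (jordanForm ϖ β e)) {i : ι}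
    (hi : ∀ j, j ≠ i → e j ≠ e i) : IsSquare (α i * β i) := by
  have hai : (α i : R) * ϖ ^ e i ≠ 0 := mul_ne_zero (α i).ne_zero (pow_ne_zero _ hϖ.ne_zero)
  have hab : Associated ((α i : R) * ϖ ^ e i) (β i * ϖ ^ e i) :=
    (associated_unit_mul_left _ _ (α i).isUnit).trans
      (associated_unit_mul_left _ _ (β i).isUnit).symm
  have hiso (j) (hj : j ≠ i) : ¬ Associated ((α j : R) * ϖ ^ e j) (α i * ϖ ^ e i) := by
    rintro ⟨v, hv⟩
    refine hi j hj (IsDiscreteValuationRing.unit_mul_pow_congr_pow hϖ hϖ (α j * v) (α i) _ _ ?_)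
    rw [← hv, Units.val_mul, mul_right_comm]
  obtain ⟨u, hu⟩ := exists_eq_mul_sq_of_equivalent h hai hab hiso
  have hβ : β i = α i * u ^ 2 := IsDiscreteValuationRing.unit_mul_pow_congr_unit hϖ _ _ (e i) (e i)
    (by rw [hu]; push_cast; ring)
  exact ⟨α i * u, by rw [hβ, pow_two]; ac_rfl⟩

end JordanForm

section Similar

variable {R : Type*} [CommRing R] {n : ℕ} {f g h : QuadraticForm R (Fin n → R)}

theorem equivalent_smul (c : R) (hfg : f.Equivalent g) : (c • f).Equivalent (c • g) :=
  hfg.map fun e ↦ { e with map_app' := fun x ↦ congrArg (c * ·) (e.map_app x) }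

theorem SimilarForm.symm (hfg : SimilarForm f g) : SimilarForm g f := by
  obtain ⟨u, hu⟩ := hfg
  refine ⟨u⁻¹, ?_⟩
  simpa [smul_smul] using (equivalent_smul (↑u⁻¹ : R) hu).symm

theorem SimilarForm.trans (hfg : SimilarForm f g) (hgh : SimilarForm g h) : SimilarForm f h := by
  obtain ⟨u, hu⟩ := hfg
  obtain ⟨v, hv⟩ := hgh
  refine ⟨v * u, ?_⟩
  rw [Units.val_mul, mul_smul]
  exact (equivalent_smul (v : R) hu).trans hv

end Similar

section Ternary

variable {R : Type*} [CommRing R]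

/-- The parameters `(r, s, a, b)` for which `X² + a ϖ ^ r Y² + b ϖ ^ s Z²` is in the standard list
of ternary forms; the four alternatives are the four families of the list, in order. -/
def IsStandardParam (δ : Rˣ) (r s : ℕ) (a b : Rˣ) : Prop :=
  (r = 0 ∧ s = 0 ∧ a = 1 ∧ b = 1) ∨
  (r = 0 ∧ 0 < s ∧ (-a = 1 ∨ -a = δ) ∧ b = 1) ∨
  (0 < r ∧ r = s ∧ a = 1 ∧ (b = 1 ∨ b = δ)) ∨
  (0 < r ∧ r < s ∧ (a = 1 ∨ a = δ) ∧ (b = 1 ∨ b = δ))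

/-- The standard list of representatives of similarity classes of primitive ternary quadratic
forms over a discrete valuation ring with uniformizer `ϖ`, given a non-square unit `δ`. -/
def IsStandardForm (ϖ : R) (δ : Rˣ) (g : QuadraticForm R (Fin 3 → R)) : Prop :=
  ∃ r s a b, IsStandardParam δ r s a b ∧ g = jordanForm ϖ ![1, a, b] ![0, r, s]

variable {ϖ : R} {δ : Rˣ}

theorem jordanForm_vec_three (ϖ : R) (a b : Rˣ) (r s : ℕ) :
    jordanForm ϖ ![1, a, b] ![0, r, s] = weightedSumSquares R ![1, a * ϖ ^ r, b * ϖ ^ s] := by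
  refine congrArg (weightedSumSquares R) (funext fun i ↦ ?_)
  fin_cases i <;> simp

theorem IsStandardParam.le {r s : ℕ} {a b : Rˣ} (h : IsStandardParam δ r s a b) : r ≤ s := by
  unfold IsStandardParam at h
  omega

theorem IsStandardParam.monotone {r s : ℕ} {a b : Rˣ} (h : IsStandardParam δ r s a b) :
    Monotone ![0, r, s] := by
  simp [Fin.monotone_iff_le_succ, Fin.forall_fin_succ, h.le]

variable [HenselianLocalRing R] [Invertible (2 : R)]

theorem exists_isStandardForm_similarForm_jordanForm [Finite (ResidueField R)] (hδ : ¬ IsSquare δ)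
    (α : Fin 3 → Rˣ) {e : Fin 3 → ℕ} (he0 : e 0 = 0) (he : Monotone e) :
    ∃ g, IsStandardForm ϖ δ g ∧ SimilarForm (jordanForm ϖ α e) g := by
  suffices h : ∃ (u a b : Rˣ), IsStandardParam δ (e 1) (e 2) a b ∧
      (jordanForm ϖ (fun i ↦ u * α i) e).Equivalent (jordanForm ϖ ![1, a, b] e) by
    obtain ⟨u, a, b, hab, h⟩ := h
    have heq : e = ![0, e 1, e 2] := by ext i; fin_cases i <;> simp [he0]
    exact ⟨_, ⟨e 1, e 2, a, b, hab, congrArg _ heq⟩, u, by rwa [smul_jordanForm]⟩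
  have he12 : e 1 ≤ e 2 := he (by decide)
  obtain h1 | h1 := (e 1).eq_zero_or_pos
  · obtain h2 | h2 := (e 2).eq_zero_or_pos
    · -- Scaling by the discriminant `u` changes it to the square `u ^ 4`.
      let u := α 0 * α 1 * α 2
      refine ⟨u, 1, 1, .inl ⟨h1, h2, rfl, rfl⟩, ?_⟩
      have h01 : (jordanForm ϖ (fun i ↦ u * α i) e).Equivalent
          (jordanForm ϖ ![1, u * α 0 * (u * α 1), u * α 2] e) := by
        refine jordanForm_equivalent_of_isSquare_mul_mul_mul zero_ne_one (he0.trans h1.symm) ?_ ?_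
        · simp
        · simp [Fin.forall_fin_succ]
      refine h01.trans (jordanForm_equivalent_of_isSquare_mul_mul_mul (i := 1) (j := 2)
        (by decide) (h1.trans h2.symm) ⟨u * u, ?_⟩ ?_)
      · simp [u, mul_comm, mul_left_comm, mul_assoc]
      · simp [Fin.forall_fin_succ]
    · obtain ⟨ε, hε, hsq⟩ := exists_isSquare_mul hδ (-(α 0 * α 1))
      refine ⟨α 2, -ε, 1, .inr (.inl ⟨h1, h2, by rwa [neg_neg], rfl⟩),
        jordanForm_equivalent_of_isSquare_mul_mul_mul zero_ne_one (he0.trans h1.symm) ?_ ?_⟩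
      · simpa [mul_comm, mul_left_comm, mul_assoc] using (IsSquare.mul_self (α 2)).mul hsq
      · simp [Fin.forall_fin_succ]
  · obtain h2 | h2 := he12.eq_or_lt
    · obtain ⟨ε, hε, hsq⟩ := exists_isSquare_mul hδ (α 1 * α 2)
      refine ⟨α 0, 1, ε, .inr (.inr (.inl ⟨h1, h2, rfl, hε⟩)),
        jordanForm_equivalent_of_isSquare_mul_mul_mul (i := 1) (j := 2) (by decide) h2 ?_ ?_⟩
      · simpa [mul_comm, mul_left_comm, mul_assoc] using (IsSquare.mul_self (α 0)).mul hsq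
      · simp [Fin.forall_fin_succ]
    · obtain ⟨ε₁, hε₁, hsq₁⟩ := exists_isSquare_mul hδ (α 0 * α 1)
      obtain ⟨ε₂, hε₂, hsq₂⟩ := exists_isSquare_mul hδ (α 0 * α 2)
      refine ⟨α 0, ε₁, ε₂, .inr (.inr (.inr ⟨h1, h2, hε₁, hε₂⟩)),
        jordanForm_equivalent_of_isSquare_mul ?_⟩
      simp [Fin.forall_fin_succ, hsq₁, hsq₂]

variable [IsDomain R] [IsDiscreteValuationRing R]

theorem IsStandardParam.eq_of_equivalent (hϖ : Irreducible ϖ) (hδ : ¬ IsSquare δ) {r s r' s' : ℕ}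
    {a b a' b' u : Rˣ} (h : IsStandardParam δ r s a b) (h' : IsStandardParam δ r' s' a' b')
    (heq : ((u : R) • jordanForm ϖ ![1, a, b] ![0, r, s]).Equivalent
      (jordanForm ϖ ![1, a', b'] ![0, r', s'])) :
    r = r' ∧ s = s' ∧ a = a' ∧ b = b' := by
  rw [smul_jordanForm] at heq
  have hexp := exponent_eq_of_jordanForm_equivalent hϖ h.monotone h'.monotone heq
  obtain ⟨rfl, rfl⟩ : r = r' ∧ s = s' := ⟨congrFun hexp 1, congrFun hexp 2⟩
  have hiso (i) := isSquare_mul_of_jordanForm_equivalent (i := i) hϖ heq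
  have hprod : IsSquare (u * (a * a' * (b * b'))) := by
    have hprod := isSquare_prod_mul_prod_of_jordanForm_equivalent hϖ.ne_zero heq
    simp only [Fin.prod_univ_three] at hprod
    refine (isSquare_mul_iff_right (.mul_self u)).1 ?_
    simpa [mul_comm, mul_left_comm, mul_assoc] using hprod
  have hu₀ (hr : 0 < r) : IsSquare u := by
    simpa using hiso 0 (by simp [Fin.forall_fin_succ, hr.ne', (hr.trans_le h.le).ne'])
  refine ⟨rfl, rfl, ?_⟩
  obtain ⟨hr, hs, rfl, rfl⟩ | ⟨hr, hs, ha, rfl⟩ | ⟨hr, hrs, rfl, hb⟩ | ⟨hr, hrs, ha, hb⟩ := h <;>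
    obtain ⟨hr', hs', rfl, rfl⟩ | ⟨hr', hs', ha', rfl⟩ | ⟨hr', hrs', rfl, hb'⟩ |
      ⟨hr', hrs', ha', hb'⟩ := h' <;> try omega
  · exact ⟨rfl, rfl⟩
  · have hu : IsSquare u := by simpa using hiso 2 (by simp [Fin.forall_fin_succ, hr, hs.ne])
    have hsq : IsSquare (-a * -a') := by simpa [isSquare_mul_iff_right hu] using hprod
    exact ⟨neg_injective (eq_of_isSquare_mul hδ ha ha' hsq), rfl⟩
  · have hsq : IsSquare (b * b') := by simpa [isSquare_mul_iff_right (hu₀ hr)] using hprod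
    exact ⟨rfl, eq_of_isSquare_mul hδ hb hb' hsq⟩
  · have hsq₁ : IsSquare (a * a') := (isSquare_mul_iff_right (hu₀ hr)).1 <| by
      simpa [mul_assoc] using hiso 1 (by simp [Fin.forall_fin_succ, hr.ne, hrs.ne'])
    have hsq₂ : IsSquare (b * b') := (isSquare_mul_iff_right (hu₀ hr)).1 <| by
      simpa [mul_assoc] using hiso 2 (by simp [Fin.forall_fin_succ, (hr.trans hrs).ne, hrs.ne])
    exact ⟨eq_of_isSquare_mul hδ ha ha' hsq₁, eq_of_isSquare_mul hδ hb hb' hsq₂⟩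

theorem stmt_14_general [Finite (ResidueField R)] (hϖ : Irreducible ϖ) (hδ : ¬ IsSquare (δ : R))
    (f : QuadraticForm R (Fin 3 → R)) (hprim : IsPrimitiveForm f) (hnd : (gramMatrix f).det ≠ 0) :
    ∃! g, IsStandardForm ϖ δ g ∧ SimilarForm f g := by
  have hδ' : ¬ IsSquare δ := fun h ↦ hδ (h.map (Units.coeHom R))
  obtain ⟨α, e, he0, he, hfα⟩ := exists_equivalent_jordanForm hϖ hprim hnd
  obtain ⟨g, hg, hαg⟩ := exists_isStandardForm_similarForm_jordanForm hδ' α he0 he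
  have hfg : SimilarForm f g := SimilarForm.trans ⟨1, by simpa using hfα⟩ hαg
  refine ⟨g, ⟨hg, hfg⟩, ?_⟩
  rintro _ ⟨⟨r', s', a', b', h', rfl⟩, hfg'⟩
  obtain ⟨r, s, a, b, h, rfl⟩ := hg
  obtain ⟨u, hu⟩ := hfg.symm.trans hfg'
  obtain ⟨rfl, rfl, rfl, rfl⟩ := h.eq_of_equivalent hϖ hδ' h' hu
  rfl

end Ternary

section PadicInt

theorem henselianLocalRing_of_isAdicComplete (R : Type*) [CommRing R] [IsLocalRing R]
    [IsAdicComplete (maximalIdeal R) R] : HenselianLocalRing R where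
  is_henselian f hf a ha hda :=
    HenselianRing.is_henselian f hf a ha (hda.map _)

theorem isUnit_two_padicInt (p : ℕ) [Fact p.Prime] (hp : p ≠ 2) : IsUnit (2 : ℤ_[p]) := by
  rw [PadicInt.isUnit_iff]
  exact PadicInt.norm_natCast_eq_one_iff.2 ((Nat.coprime_primes Fact.out Nat.prime_two).2 hp)

instance henselianLocalRing_padicInt (p : ℕ) [Fact p.Prime] : HenselianLocalRing ℤ_[p] :=
  henselianLocalRing_of_isAdicComplete _

instance finite_residueField_padicInt (p : ℕ) [Fact p.Prime] : Finite (ResidueField ℤ_[p]) :=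
  .of_equiv _ (PadicInt.residueField (p := p)).symm.toEquiv

theorem inStandardList_iff {p : ℕ} [Fact p.Prime] {δ : ℤ_[p]ˣ}
    {g : QuadraticForm ℤ_[p] (Fin 3 → ℤ_[p])} :
    InStandardList p δ g ↔ IsStandardForm (p : ℤ_[p]) δ g := by
  -- The weights of the first form of `InStandardList` are elaborated as natural numbers.
  have hone : weightedSumSquares ℤ_[p] ![1, 1, 1] = weightedSumSquares ℤ_[p]
      ![1, ((1 : ℤ_[p]ˣ) : ℤ_[p]) * (p : ℤ_[p]) ^ 0, ((1 : ℤ_[p]ˣ) : ℤ_[p]) * (p : ℤ_[p]) ^ 0] := by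
    ext x
    simp [weightedSumSquares_apply, Fin.sum_univ_three]
  simp only [IsStandardForm, jordanForm_vec_three]
  constructor
  · rintro (rfl | ⟨s, ε, hs, hε, rfl⟩ | ⟨r, ε, hr, hε, rfl⟩ | ⟨r, s, ε₁, ε₂, hr, hs, h₁, h₂, rfl⟩)
    · exact ⟨0, 0, 1, 1, .inl ⟨rfl, rfl, rfl, rfl⟩, hone⟩
    · exact ⟨0, s, -ε, 1, .inr (.inl ⟨rfl, hs, by rwa [neg_neg], rfl⟩), by simp⟩
    · exact ⟨r, r, 1, ε, .inr (.inr (.inl ⟨hr, rfl, rfl, hε⟩)), by simp⟩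
    · exact ⟨r, s, ε₁, ε₂, .inr (.inr (.inr ⟨hr, hs, h₁, h₂⟩)), rfl⟩
  · rintro ⟨r, s, a, b, ⟨rfl, rfl, rfl, rfl⟩ | ⟨rfl, hs, ha, rfl⟩ | ⟨hr, rfl, rfl, hb⟩ |
      ⟨hr, hs, ha, hb⟩, rfl⟩
    · exact .inl hone.symm
    · exact .inr (.inl ⟨s, -a, hs, ha, by simp⟩)
    · exact .inr (.inr (.inl ⟨r, b, hr, hb, by simp⟩))
    · exact .inr (.inr (.inr ⟨r, s, a, b, hr, hs, ha, hb, rfl⟩))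

end PadicInt

theorem stmt_14 (p : ℕ) [Fact p.Prime] (hp : p ≠ 2)
    (δ : ℤ_[p]ˣ) (hδ : ¬ IsSquare (δ : ℤ_[p]))
    (f : QuadraticForm ℤ_[p] (Fin 3 → ℤ_[p]))
    (hprim : IsPrimitiveForm f) (hnd : (gramMatrix f).det ≠ 0) :
    ∃! g : QuadraticForm ℤ_[p] (Fin 3 → ℤ_[p]), InStandardList p δ g ∧ SimilarForm f g := by
  have := (isUnit_two_padicInt p hp).invertible
  simpa only [inStandardList_iff] using stmt_14_general PadicInt.irreducible_p hδ f hprim hnd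
end

section
/- Let p be a prime and consider the quaternion ring O = ℍ[ℤ_p, p, p] (so i² = j² = p, ij = −ji). Let I be the left ideal of O generated by the elements i and j. Then I is a two-sided ideal of O, and I is not principal as a left ideal: there is no g ∈ O such that I equals the left ideal O·g generated by g. -/
open Quaternion

/-! Modulo `J = (c₁, c₃)` the real part is multiplicative, and the left ideal `(i, j)` is the
kernel of the resulting ring homomorphism to `R ⧸ J`; hence it is two-sided. If it is generated by
a single `g`, then `g.re ∈ J`. Modulo `J`, the `i`-coefficient of `x * g = i` makes `g.imI` a unit,
and then the coefficients of `y * g = j` are incompatible unless `1 ∈ J`. Conversely, if `1 ∈ J`,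
the kernel is the whole algebra. -/

section

variable {R S : Type*} [CommRing R] [CommRing S] {c₁ c₂ c₃ : R}

theorem mk_span_pair_left (a b : R) : Ideal.Quotient.mk (Ideal.span {a, b}) a = 0 :=
  Ideal.Quotient.eq_zero_iff_mem.2 (Ideal.subset_span (by simp))

theorem mk_span_pair_right (a b : R) : Ideal.Quotient.mk (Ideal.span {a, b}) b = 0 :=
  Ideal.Quotient.eq_zero_iff_mem.2 (Ideal.subset_span (by simp))

theorem span_pair_eq_top_iff_isCoprime {a b : R} : Ideal.span {a, b} = ⊤ ↔ IsCoprime a b := by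
  rw [Ideal.eq_top_iff_one, Ideal.mem_span_pair, IsCoprime]

variable (c₁ c₂ c₃) in
/-- The left ideal generated by the standard basis elements `i` and `j` of the quaternion algebra
with `i² = c₁ + c₂ i` and `j² = c₃`. -/
abbrev idealIJ : Ideal ℍ[R,c₁,c₂,c₃] := Ideal.span {⟨0, 1, 0, 0⟩, ⟨0, 0, 1, 0⟩}

variable (c₁ c₂ c₃) in
/-- The augmentation of a quaternion algebra: the real part modulo `c₁` and `c₃`, which is the
quotient map by the ideal generated by `i` and `j`. -/
def quaternionAugmentation : ℍ[R,c₁,c₂,c₃] →+* R ⧸ Ideal.span {c₁, c₃} where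
  toFun x := Ideal.Quotient.mk _ x.re
  map_one' := by simp
  map_zero' := by simp
  map_add' x y := by simp
  map_mul' x y := by
    simp [mk_span_pair_left, mk_span_pair_right]

theorem mem_ker_quaternionAugmentation {x : ℍ[R,c₁,c₂,c₃]} :
    x ∈ RingHom.ker (quaternionAugmentation c₁ c₂ c₃) ↔ x.re ∈ Ideal.span {c₁, c₃} :=
  Ideal.Quotient.eq_zero_iff_mem

theorem idealIJ_eq_ker : idealIJ c₁ c₂ c₃ = RingHom.ker (quaternionAugmentation c₁ c₂ c₃) := by
  ext x
  rw [mem_ker_quaternionAugmentation, Ideal.mem_span_pair, Ideal.mem_span_pair]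
  constructor
  · rintro ⟨a, b, rfl⟩
    exact ⟨a.imI, b.imJ, by simp [mul_comm]⟩
  · rintro ⟨s, t, hst⟩
    refine ⟨⟨x.imI - c₂ * s, s, 0, 0⟩, ⟨x.imJ, x.imK, t, 0⟩, ?_⟩
    ext <;> simp [← hst, mul_comm]

theorem subsingleton_of_mul_eq_i_of_mul_eq_j (f : R →+* S) (hc₁ : f c₁ = 0) (hc₃ : f c₃ = 0)
    {g x y : ℍ[R,c₁,c₂,c₃]} (hg : f g.re = 0) (hx : x * g = ⟨0, 1, 0, 0⟩)
    (hy : y * g = ⟨0, 0, 1, 0⟩) : Subsingleton S := by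
  have imI_eq (z : ℍ[R,c₁,c₂,c₃]) :
      f (z * g).imI = (f z.re + f c₂ * f z.imI) * f g.imI := by
    simp only [QuaternionAlgebra.imI_mul, map_add, map_sub, map_mul, hc₃, hg]
    ring
  have x_imI : (f x.re + f c₂ * f x.imI) * f g.imI = 1 := by simp [← imI_eq, hx]
  have y_imI : (f y.re + f c₂ * f y.imI) * f g.imI = 0 := by simp [← imI_eq, hy]
  have y_imJ : f y.re * f g.imJ + f c₂ * f y.imJ * f g.imI = 1 := by
    simpa [hc₁, hg] using congrArg (fun q ↦ f q.imJ) hy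
  have y_imK : f y.re * f g.imK + f y.imI * f g.imJ + f c₂ * f y.imI * f g.imK
      - f y.imJ * f g.imI = 0 := by
    simpa [hg] using congrArg (fun q ↦ f q.imK) hy
  have y_re : f y.re = -(f c₂ * f y.imI) := by
    have g_imI_isUnit : IsUnit (f g.imI) := .of_mul_eq_one_right _ x_imI
    exact eq_neg_of_add_eq_zero_left (g_imI_isUnit.mul_left_eq_zero.1 y_imI)
  have y_imI_mul : f y.imI * f g.imJ = f y.imJ * f g.imI := by
    rw [y_re] at y_imK
    linear_combination y_imK
  have one_eq_zero : (1 : S) = 0 := by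
    rw [y_re] at y_imJ
    linear_combination -f c₂ * y_imI_mul - y_imJ
  exact subsingleton_of_zero_eq_one one_eq_zero.symm

theorem idealIJ_eq_top_of_isCoprime (h : IsCoprime c₁ c₃) : idealIJ c₁ c₂ c₃ = ⊤ := by
  rw [Ideal.eq_top_iff_one, idealIJ_eq_ker, mem_ker_quaternionAugmentation,
    span_pair_eq_top_iff_isCoprime.2 h]
  exact Submodule.mem_top

theorem isCoprime_of_isPrincipal_idealIJ (h : (idealIJ c₁ c₂ c₃).IsPrincipal) :
    IsCoprime c₁ c₃ := by
  obtain ⟨g, hg : idealIJ c₁ c₂ c₃ = Ideal.span {g}⟩ := h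
  have g_mem : g ∈ idealIJ c₁ c₂ c₃ := hg ▸ Ideal.mem_span_singleton_self g
  have mk_re_g : Ideal.Quotient.mk (Ideal.span {c₁, c₃}) g.re = 0 := by
    rwa [idealIJ_eq_ker] at g_mem
  have i_mem : ⟨0, 1, 0, 0⟩ ∈ idealIJ c₁ c₂ c₃ := Ideal.subset_span (by simp)
  have j_mem : ⟨0, 0, 1, 0⟩ ∈ idealIJ c₁ c₂ c₃ := Ideal.subset_span (by simp)
  obtain ⟨x, hx⟩ := Ideal.mem_span_singleton'.1 (hg ▸ i_mem)
  obtain ⟨y, hy⟩ := Ideal.mem_span_singleton'.1 (hg ▸ j_mem)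
  rw [← span_pair_eq_top_iff_isCoprime, ← Ideal.Quotient.subsingleton_iff]
  exact subsingleton_of_mul_eq_i_of_mul_eq_j _ (mk_span_pair_left c₁ c₃)
    (mk_span_pair_right c₁ c₃) mk_re_g hx hy

theorem stmt_18_general (c₁ c₂ c₃ : R) :
    (idealIJ c₁ c₂ c₃).IsTwoSided ∧ ((idealIJ c₁ c₂ c₃).IsPrincipal ↔ IsCoprime c₁ c₃) := by
  refine ⟨?_, isCoprime_of_isPrincipal_idealIJ, fun h ↦ ?_⟩
  · rw [idealIJ_eq_ker]
    infer_instance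
  · rw [idealIJ_eq_top_of_isCoprime h]
    infer_instance

end

theorem stmt_18 (p : ℕ) [Fact p.Prime] :
    let O := ℍ[ℤ_[p], (p : ℤ_[p]), (p : ℤ_[p])]
    let i : O := ⟨0, 1, 0, 0⟩
    let j : O := ⟨0, 0, 1, 0⟩
    let I : Ideal O := Ideal.span {i, j}
    (∀ x ∈ I, ∀ r : O, x * r ∈ I) ∧ ¬ ∃ g : O, I = Ideal.span {g} := by
  obtain ⟨two_sided, principal_iff⟩ := stmt_18_general (p : ℤ_[p]) 0 (p : ℤ_[p])
  exact ⟨fun x hx r ↦ two_sided.mul_mem_of_left r hx, fun hg ↦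
    PadicInt.prime_p.not_isUnit (isCoprime_self.1 (principal_iff.1 ⟨hg⟩))⟩
end
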